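/- Let κ, θ, σ > 0, set ν := 2κθ/σ², and let G(x) := ∫ₓ^∞ π_{ν,θ}(y)/y dy. Fix ε > 0 and define f : (0,∞) → ℝ by f(x) = 1 for x ∈ (0, ε] and f(x) = π_{ν,θ}(ε)·G(x)/(G(ε)·π_{ν,θ}(x)) for x > ε. Then κ·∫₀^ε π_{ν,θ}(x) dx + (σ²/2)·∫_ε^∞ π_{ν,θ}(x)·[ x·f'(x)² + (ν/θ)·f(x)² ] dx = κ·∫₀^ε π_{ν,θ}(x) dx + (σ²/2)·π_{ν,θ}(ε)²/G(ε) + (σ²/2)·π_{ν,θ}(ε)·(ν − 1 − νε/θ). -/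

import Mathlib

open Real MeasureTheory Set

/-- Gamma density with shape `ν` and rate `ν/θ`. -/
noncomputable def piDens (ν θ x : ℝ) : ℝ :=
  ((ν / θ) ^ ν / Real.Gamma ν) * x ^ (ν - 1) * Real.exp (-ν * x / θ)

/-- The function `G(x) = ∫ₓ^∞ π_{ν,θ}(y)/y dy`. -/
noncomputable def Gfun (ν θ x : ℝ) : ℝ :=
  ∫ y in Set.Ioi x, piDens ν θ y / y

open Filter Topology

lemma piDens_pos {ν θ x : ℝ} (hν : 0 < ν) (hθ : 0 < θ) (hx : 0 < x) : 0 < piDens ν θ x := by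
  have := Real.Gamma_pos_of_pos hν
  unfold piDens
  positivity

lemma piDens_hasDerivAt {ν θ x : ℝ} (hx : 0 < x) :
    HasDerivAt (piDens ν θ) (piDens ν θ x * ((ν - 1) / x - ν / θ)) x := by
  have h1 : HasDerivAt (fun x : ℝ => x ^ (ν - 1)) ((ν - 1) * x ^ (ν - 1 - 1)) x :=
    Real.hasDerivAt_rpow_const (Or.inl hx.ne')
  have h2 : HasDerivAt (fun x : ℝ => Real.exp (-ν * x / θ))
      (Real.exp (-ν * x / θ) * (-ν * 1 / θ)) x :=
    (((hasDerivAt_id' x).const_mul (-ν)).div_const θ).exp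
  have h3 := (h1.const_mul ((ν / θ) ^ ν / Real.Gamma ν)).mul h2
  refine h3.congr_deriv ?_
  unfold piDens
  rw [Real.rpow_sub_one hx.ne' (ν - 1)]
  ring

lemma quot_hasDerivAt {ν θ x : ℝ} (hx : 0 < x) :
    HasDerivAt (fun y => piDens ν θ y / y)
      (piDens ν θ x / x * ((ν - 2) / x - ν / θ)) x := by
  refine ((piDens_hasDerivAt (ν := ν) (θ := θ) hx).div (hasDerivAt_id' x) hx.ne').congr_deriv ?_
  field_simp
  ring

lemma quot_contOn {ν θ a : ℝ} (ha : 0 < a) :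
    ContinuousOn (fun y => piDens ν θ y / y) (Ici a) := fun _ hx =>
  (quot_hasDerivAt (lt_of_lt_of_le ha hx)).continuousAt.continuousWithinAt

lemma quot_eq {ν θ : ℝ} {b : ℝ} (hb : b = ν / θ) :
    (fun y => piDens ν θ y / y) =ᶠ[atTop] (fun y => ((ν / θ) ^ ν / Real.Gamma ν) *
      (y ^ (ν - 2) * Real.exp (-(b / 2) * y)) * Real.exp (-(b / 2) * y)) := by
  filter_upwards [eventually_gt_atTop 0] with y hy
  unfold piDens
  have h1 : Real.exp (-ν * y / θ) = Real.exp (-(b / 2) * y) * Real.exp (-(b / 2) * y) := by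
    rw [← Real.exp_add, hb]; congr 1; ring
  have h2 : y ^ (ν - 2) = y ^ (ν - 1) / y := by
    rw [← Real.rpow_sub_one hy.ne']; congr 1; ring
  rw [h1, h2]; ring

lemma quot_isBigO {ν θ : ℝ} (hν : 0 < ν) (hθ : 0 < θ) :
    (fun y => piDens ν θ y / y) =O[atTop] (fun y => Real.exp (-(ν / θ / 2) * y)) := by
  have hb : 0 < ν / θ / 2 := by positivity
  have h := ((tendsto_rpow_mul_exp_neg_mul_atTop_nhds_zero (ν - 2) _ hb).const_mul
    ((ν / θ) ^ ν / Real.Gamma ν)).isBigO_one ℝ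
  have h' := h.mul (Asymptotics.isBigO_refl (fun y => Real.exp (-(ν / θ / 2) * y)) atTop)
  simp only [one_mul] at h'
  exact h'.congr' (quot_eq rfl).symm EventuallyEq.rfl

lemma quot_tendsto {ν θ : ℝ} (hν : 0 < ν) (hθ : 0 < θ) :
    Tendsto (fun y => piDens ν θ y / y) atTop (𝓝 0) := by
  refine (quot_isBigO hν hθ).trans_tendsto ?_
  have hb : 0 < ν / θ / 2 := by positivity
  simpa using tendsto_rpow_mul_exp_neg_mul_atTop_nhds_zero 0 _ hb

lemma quot_int {ν θ a : ℝ} (hν : 0 < ν) (hθ : 0 < θ) (ha : 0 < a) :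
    IntegrableOn (fun y => piDens ν θ y / y) (Ioi a) :=
  integrable_of_isBigO_exp_neg (by positivity) (quot_contOn ha) (quot_isBigO hν hθ)

lemma G_eq {ν θ a x : ℝ} (hν : 0 < ν) (hθ : 0 < θ) (ha : 0 < a) (hx : 0 < x) :
    Gfun ν θ x = Gfun ν θ a - ∫ y in a..x, piDens ν θ y / y := by
  have := intervalIntegral.integral_interval_add_Ioi (quot_int hν hθ ha) (quot_int hν hθ hx)
  unfold Gfun
  linarith

lemma G_tendsto {ν θ : ℝ} (hν : 0 < ν) (hθ : 0 < θ) :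
    Tendsto (Gfun ν θ) atTop (𝓝 0) := by
  have h := (intervalIntegral_tendsto_integral_Ioi 1 (quot_int hν hθ one_pos)
    tendsto_id).const_sub (Gfun ν θ 1)
  have h0 : Gfun ν θ 1 - ∫ y in Ioi 1, piDens ν θ y / y = 0 := sub_self _
  rw [h0] at h
  refine h.congr' ?_
  filter_upwards [eventually_gt_atTop 0] with x hx
  exact (G_eq hν hθ one_pos hx).symm

lemma G_hasDerivAt {ν θ x : ℝ} (hν : 0 < ν) (hθ : 0 < θ) (hx : 0 < x) :
    HasDerivAt (Gfun ν θ) (-(piDens ν θ x / x)) x := by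
  have hc : ContinuousOn (fun y => piDens ν θ y / y) (Ioi 0) := fun _ hy =>
    (quot_hasDerivAt hy).continuousAt.continuousWithinAt
  have h1 : HasDerivAt (fun u => ∫ y in (1:ℝ)..u, piDens ν θ y / y) (piDens ν θ x / x) x := by
    apply intervalIntegral.integral_hasDerivAt_right
    · apply ContinuousOn.intervalIntegrable
      refine hc.mono fun y hy => ?_
      exact lt_of_lt_of_le (lt_min one_pos hx) hy.1
    · exact hc.stronglyMeasurableAtFilter isOpen_Ioi x hx
    · exact (quot_hasDerivAt hx).continuousAt
  refine (h1.const_sub (Gfun ν θ 1)).congr_of_eventuallyEq ?_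
  filter_upwards [Ioi_mem_nhds hx] with y hy
  exact G_eq hν hθ one_pos hy

lemma G_pos {ν θ x : ℝ} (hν : 0 < ν) (hθ : 0 < θ) (hx : 0 < x) : 0 < Gfun ν θ x := by
  have hp : ∀ y ∈ Ioi x, 0 < piDens ν θ y / y := fun y hy =>
    div_pos (piDens_pos hν hθ (hx.trans hy)) (hx.trans hy)
  unfold Gfun
  rw [setIntegral_pos_iff_support_of_nonneg_ae _ (quot_int hν hθ hx)]
  · have : Function.support (fun y => piDens ν θ y / y) ∩ Ioi x = Ioi x :=
      inter_eq_right.2 fun y hy => (hp y hy).ne'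
    rw [this]; simp
  · filter_upwards [ae_restrict_mem measurableSet_Ioi] with y hy
    exact (hp y hy).le

lemma ratio_tendsto {ν θ : ℝ} (hν : 0 < ν) (hθ : 0 < θ) :
    Tendsto (fun x => Gfun ν θ x / (piDens ν θ x / x)) atTop (𝓝 (θ / ν)) := by
  have hb : 0 < ν / θ := by positivity
  have hl : Tendsto (fun x : ℝ => (ν - 2) / x - ν / θ) atTop (𝓝 (-(ν / θ))) := by
    simpa using (tendsto_const_nhds (x := ν - 2)).div_atTop tendsto_id |>.sub_const (ν / θ)
  have hne : ∀ᶠ x : ℝ in atTop, (ν - 2) / x - ν / θ ≠ 0 :=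
    hl.eventually_ne (by linarith)
  refine HasDerivAt.lhopital_zero_atTop (f' := fun x => -(piDens ν θ x / x))
    (g' := fun x => piDens ν θ x / x * ((ν - 2) / x - ν / θ)) ?_ ?_ ?_
    (G_tendsto hν hθ) (quot_tendsto hν hθ) ?_
  · filter_upwards [eventually_gt_atTop 0] with x hx using G_hasDerivAt hν hθ hx
  · filter_upwards [eventually_gt_atTop 0] with x hx using quot_hasDerivAt hx
  · filter_upwards [eventually_gt_atTop 0, hne] with x hx h
    exact mul_ne_zero (div_pos (piDens_pos hν hθ hx) hx).ne' h
  · have h := (hl.inv₀ (by linarith)).neg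
    have e : -(-(ν / θ))⁻¹ = θ / ν := by rw [inv_neg, neg_neg, inv_div]
    rw [e] at h
    refine h.congr' ?_
    filter_upwards [eventually_gt_atTop 0, hne] with x hx h
    have := (div_pos (piDens_pos hν hθ hx) hx).ne'
    rw [neg_div, div_mul_eq_div_div, div_self this, one_div]

lemma H_tendsto {ν θ c : ℝ} (hν : 0 < ν) (hθ : 0 < θ) :
    Tendsto (fun x => -c ^ 2 * (Gfun ν θ x + Gfun ν θ x ^ 2 / piDens ν θ x *
      (ν - 1 - ν / θ * x))) atTop (𝓝 0) := by
  have hG := G_tendsto hν hθ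
  have hl : Tendsto (fun x : ℝ => (ν - 1) / x - ν / θ) atTop (𝓝 (0 - ν / θ)) :=
    ((tendsto_const_nhds (x := ν - 1)).div_atTop tendsto_id).sub_const (ν / θ)
  have h := (hG.add ((hG.mul (ratio_tendsto hν hθ)).mul hl)).const_mul (-c ^ 2)
  simp only [zero_mul, add_zero, mul_zero] at h
  refine h.congr' ?_
  filter_upwards [eventually_gt_atTop 0] with x hx
  have := (piDens_pos hν hθ hx).ne'
  congr 2
  field_simp


theorem cir_capacity_value_of_minimizer
    (κ θ σ ν : ℝ) (hκ : 0 < κ) (hθ : 0 < θ) (hσ : 0 < σ)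
    (hν : ν = 2 * κ * θ / σ ^ 2)
    (ε : ℝ) (hε : 0 < ε)
    (f : ℝ → ℝ)
    (hf1 : ∀ x ∈ Set.Ioc (0:ℝ) ε, f x = 1)
    (hf2 : ∀ x ∈ Set.Ioi ε,
      f x = piDens ν θ ε * Gfun ν θ x / (Gfun ν θ ε * piDens ν θ x)) :
    κ * (∫ x in (0:ℝ)..ε, piDens ν θ x)
      + σ ^ 2 / 2 * ∫ x in Set.Ioi ε,
          piDens ν θ x * (x * (deriv f x) ^ 2 + ν / θ * (f x) ^ 2)
    = κ * (∫ x in (0:ℝ)..ε, piDens ν θ x)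
      + σ ^ 2 / 2 * (piDens ν θ ε) ^ 2 / Gfun ν θ ε
      + σ ^ 2 / 2 * piDens ν θ ε * (ν - 1 - ν * ε / θ) := by
  have hνp : 0 < ν := by rw [hν]; positivity
  clear hν
  have hGε := G_pos hνp hθ hε
  have hpε := piDens_pos hνp hθ hε
  obtain ⟨c, hc⟩ : ∃ c, c = piDens ν θ ε / Gfun ν θ ε := ⟨_, rfl⟩
  have hf : ∀ x ∈ Ioi ε, f x = c * (Gfun ν θ x / piDens ν θ x) := by
    intro x hx
    rw [hf2 x hx, hc, mul_div_mul_comm]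
  have hfd : ∀ x ∈ Ioi ε, deriv f x =
      c * (-1 / x - Gfun ν θ x / piDens ν θ x * ((ν - 1) / x - ν / θ)) := by
    intro x hx
    have hx0 : 0 < x := hε.trans hx
    have hp := (piDens_pos hνp hθ hx0).ne'
    have h := ((G_hasDerivAt hνp hθ hx0).div (piDens_hasDerivAt (ν := ν) (θ := θ) hx0)
      hp).const_mul c
    have h' : HasDerivAt f _ x := h.congr_of_eventuallyEq (by
      filter_upwards [Ioi_mem_nhds hx] with y hy
      exact hf y hy)
    rw [h'.deriv]
    field_simp
  have key : ∫ x in Set.Ioi ε, piDens ν θ x * (x * (deriv f x) ^ 2 + ν / θ * (f x) ^ 2)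
      = 0 - (-c ^ 2 * (Gfun ν θ ε + Gfun ν θ ε ^ 2 / piDens ν θ ε *
      (ν - 1 - ν / θ * ε))) := by
    have hd : ∀ x, 0 < x → HasDerivAt (fun x => -c ^ 2 * (Gfun ν θ x +
        Gfun ν θ x ^ 2 / piDens ν θ x * (ν - 1 - ν / θ * x))) _ x := fun x hx0 =>
      ((G_hasDerivAt hνp hθ hx0).add ((((G_hasDerivAt hνp hθ hx0).pow 2).div
        (piDens_hasDerivAt (ν := ν) (θ := θ) hx0) (piDens_pos hνp hθ hx0).ne').mul
        (((hasDerivAt_id' x).const_mul (ν / θ)).const_sub (ν - 1)))).const_mul (-c ^ 2)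
    refine integral_Ioi_of_hasDerivAt_of_nonneg (g := fun x => -c ^ 2 * (Gfun ν θ x +
      Gfun ν θ x ^ 2 / piDens ν θ x * (ν - 1 - ν / θ * x)))
      (hd ε hε).continuousAt.continuousWithinAt ?_ ?_ (H_tendsto hνp hθ)
    · intro x hx
      have hx0 : 0 < x := hε.trans hx
      have hp := (piDens_pos hνp hθ hx0).ne'
      refine (hd x hx0).congr_deriv ?_
      rw [hfd x hx, hf x hx]
      simp only [Pi.pow_apply, Pi.div_apply]
      field_simp
      ring
    · intro x hx
      have hx0 : 0 < x := hε.trans hx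
      have hp := piDens_pos hνp hθ hx0
      positivity
  rw [key, hc]
  field_simp
  ring
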